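/- Sequential composition: if for each i ∈ {1,…,k} the mechanism M_i : D^n → PMF(R_i) satisfies ε_i-differential privacy, then the mechanism M : D^n → PMF(R_1 × ⋯ × R_k) that on input x outputs the independent product of the distributions M_1(x), …, M_k(x) satisfies (ε_1 + ⋯ + ε_k)-differential privacy. -/

import Mathlib

open Finset

section
variable {D : Type*} [Fintype D] [DecidableEq D] {n : ℕ}

/-- A randomized algorithm `M : D^n → PMF O` satisfies `ε`-differential privacy if for all
databases `x, y` at Hamming distance at most 1 and every output `o`,
`Pr[M(x) = o] ≤ exp ε * Pr[M(y) = o]`. -/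
def DP {O : Type*} (M : (Fin n → D) → PMF O) (ε : ℝ) : Prop :=
  ∀ x y : Fin n → D, hammingDist x y ≤ 1 →
    ∀ o : O, M x o ≤ ENNReal.ofReal (Real.exp ε) * M y o

theorem ofReal_exp_sum {ι : Type*} (s : Finset ι) (f : ι → ℝ) :
    ENNReal.ofReal (Real.exp (∑ i ∈ s, f i)) = ∏ i ∈ s, ENNReal.ofReal (Real.exp (f i)) := by
  rw [Real.exp_sum, ENNReal.ofReal_prod_of_nonneg fun i _ => Real.exp_nonneg (f i)]

omit [Fintype D] in
theorem sequential_composition_general {ι : Type*} [Fintype ι] {Rs : ι → Type*} (ε : ι → ℝ)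
    (M : ∀ i, (Fin n → D) → PMF (Rs i)) (hDP : ∀ i, DP (M i) (ε i))
    (Mprod : (Fin n → D) → PMF (∀ i, Rs i))
    (hprod : ∀ (x : Fin n → D) (o : ∀ i, Rs i), Mprod x o = ∏ i, M i x (o i)) :
    DP Mprod (∑ i, ε i) := by
  intro x y hxy o
  calc
    Mprod x o = ∏ i, M i x (o i) := hprod x o
    _ ≤ ∏ i, ENNReal.ofReal (Real.exp (ε i)) * M i y (o i) :=
      prod_le_prod' fun i _ => hDP i x y hxy (o i)
    _ = (∏ i, ENNReal.ofReal (Real.exp (ε i))) * ∏ i, M i y (o i) := prod_mul_distrib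
    _ = ENNReal.ofReal (Real.exp (∑ i, ε i)) * Mprod y o := by rw [ofReal_exp_sum, hprod]

/-- Sequential composition: if each mechanism `M i` is `ε i`-differentially private, then the
mechanism `Mprod` which on input `x` outputs the independent product of the distributions
`M 1 x, …, M k x` is `(∑ i, ε i)`-differentially private. -/
theorem sequential_composition {k : ℕ} {Rs : Fin k → Type*} [∀ i, Countable (Rs i)]
    (ε : Fin k → ℝ) (hε : ∀ i, 0 ≤ ε i)
    (M : ∀ i : Fin k, (Fin n → D) → PMF (Rs i))
    (hDP : ∀ i : Fin k, DP (M i) (ε i))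
    (Mprod : (Fin n → D) → PMF (∀ i, Rs i))
    (hprod : ∀ (x : Fin n → D) (o : ∀ i, Rs i), Mprod x o = ∏ i, M i x (o i)) :
    DP Mprod (∑ i, ε i) :=
  sequential_composition_general ε M hDP Mprod hprod

end
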